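/- Let χ be a hefty (dimension ≥ 5) quasi p-Steinberg irreducible character of G(r,1,n) with n ≥ 9 and p ≤ n a prime. Then χ is linear — contradiction; i.e., for n ≥ 9 and any prime p ≤ n, every non-linear irreducible character of G(r,1,n) vanishes at some p-regular element. Equivalently: if λ = (λ₀,…,λ_{r−1}) is an r-tuple of partitions of total size n ≥ 9 with some λ_j ∉ {(m),(1^m), ∅}, or with at least two nonempty components, and χ^λ is non-linear, then there is a p-regular element g ∈ G(r,1,n) with χ^λ(g) = 0. -/

import Mathlib

/-- The base group `(ℤ/rℤ)^n` of the wreath product, written multiplicatively. -/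
abbrev WreathBase (r n : ℕ) := Fin n → Multiplicative (ZMod r)

/-- The permutation action of `S_n` on `(ℤ/rℤ)^n` by permuting coordinates. -/
def wreathAction (r n : ℕ) : Equiv.Perm (Fin n) →* MulAut (WreathBase r n) where
  toFun σ :=
    { toFun := fun z => z ∘ σ.symm
      invFun := fun z => z ∘ σ
      left_inv := fun z => by ext i; simp
      right_inv := fun z => by ext i; simp
      map_mul' := fun _ _ => rfl }
  map_one' := by ext z i; rfl
  map_mul' σ τ := by ext z i; rfl

/-- The wreath product `G(r,1,n) = (ℤ/rℤ)^n ⋊ S_n`. -/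
abbrev GWreath (r n : ℕ) := WreathBase r n ⋊[wreathAction r n] Equiv.Perm (Fin n)

section SymmetricGroupCharacters

open Equiv Matrix Polynomial

/-- `det (1 + X P_g)` for the permutation matrix `P_g` of `g`; its coefficients are the characters
of the exterior powers of the permutation representation. -/
noncomputable def permPoly {α : Type*} [Fintype α] [DecidableEq α] (g : Perm α) : ℤ[X] :=
  (1 + (X : ℤ[X]) • g.permMatrix ℤ[X]).det

/-- The principal minor of the permutation matrix of `g` with rows and columns in `S`. -/
def permMinor {α : Type*} [Fintype α] [DecidableEq α] (S : Finset α) (g : Perm α) : ℤ :=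
  (Matrix.of fun i j => if (if i ∈ S then g i else i) = j then (1 : ℤ) else 0).det

section PermPoly

variable {α β : Type*} [Fintype α] [DecidableEq α] [Fintype β] [DecidableEq β]

omit [Fintype α] in
lemma permMatrix_apply_eq {R : Type*} [Zero R] [One R] (g : Perm α) (i j : α) :
    g.permMatrix R i j = if g i = j then 1 else 0 := by
  simp [Equiv.toPEquiv_apply, PEquiv.toMatrix_apply, eq_comm]

lemma permPoly_eq_sum (g : Perm α) :
    permPoly g = ∑ S : Finset α, C (permMinor S g) * X ^ S.card := by
  unfold permPoly permMinor
  rw [add_comm]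
  refine ((Matrix.detRowAlternating (R := ℤ[X]) (n := α)).toMultilinearMap.map_add_univ
    (fun i j => (X : ℤ[X]) * g.permMatrix ℤ[X] i j)
    (fun i j => (1 : Matrix α α ℤ[X]) i j)).trans (Finset.sum_congr rfl fun S _ => ?_)
  have h1 : S.piecewise (fun i j => (X : ℤ[X]) * g.permMatrix ℤ[X] i j)
        (fun i j => (1 : Matrix α α ℤ[X]) i j) =
      fun i => (S.piecewise (fun _ => X) (fun _ => 1) i : ℤ[X]) •
        fun j => if (if i ∈ S then g i else i) = j then (1 : ℤ[X]) else 0 := by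
    funext i j
    by_cases hi : i ∈ S <;> simp [hi, Matrix.one_apply]
  rw [h1, MultilinearMap.map_smul_univ, Finset.prod_piecewise]
  simp only [Finset.univ_inter, Finset.prod_const, one_pow, mul_one, smul_eq_mul]
  rw [mul_comm, RingHom.map_det]
  congr 1
  change Matrix.det _ = _
  congr 1
  ext i j : 2
  simp [apply_ite (C : ℤ → ℤ[X])]

lemma coeff_permPoly (g : Perm α) (k : ℕ) :
    (permPoly g).coeff k = ∑ S ∈ Finset.univ.powersetCard k, permMinor S g := by
  rw [permPoly_eq_sum, Polynomial.finsetSum_coeff, Finset.powersetCard_eq_filter,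
    Finset.sum_filter]
  simp only [coeff_C_mul, coeff_X_pow, Finset.powerset_univ]
  simp [eq_comm]

lemma permPoly_permCongr (ε : α ≃ β) (g : Perm α) : permPoly (ε.permCongr g) = permPoly g := by
  unfold permPoly
  rw [← Matrix.det_reindex_self ε]
  congr 1
  ext i j : 2
  simp only [Matrix.add_apply, Matrix.smul_apply, permMatrix_apply_eq, Matrix.one_apply,
    Equiv.permCongr_apply, Matrix.reindex_apply, Matrix.submatrix_apply,
    ← Equiv.eq_symm_apply, EmbeddingLike.apply_eq_iff_eq]

lemma permMinor_permCongr (ε : α ≃ β) (g : Perm α) (S : Finset α) :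
    permMinor (S.map ε.toEmbedding) (ε.permCongr g) = permMinor S g := by
  unfold permMinor
  rw [← Matrix.det_reindex_self ε]
  congr 1
  ext i j : 2
  by_cases hi : ε.symm i ∈ S <;> simp [hi, Finset.mem_map_equiv, ← Equiv.eq_symm_apply]

lemma permPoly_sumCongr (a : Perm α) (b : Perm β) :
    permPoly (Equiv.sumCongr a b) = permPoly a * permPoly b := by
  unfold permPoly
  rw [← Matrix.det_fromBlocks_zero₂₁ _ 0]
  congr 1
  ext i j : 2
  rcases i with i | i <;> rcases j with j | j <;>
    simp [Matrix.one_apply]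

lemma permMinor_eq_zero {S : Finset α} {g : Perm α} {i : α} (hi : i ∈ S) (hgi : g i ∉ S) :
    permMinor S g = 0 := by
  refine Matrix.det_zero_of_row_eq (i := i) (j := g i) (fun h => hgi (h ▸ hi)) ?_
  funext j
  simp [hi, hgi]

lemma permMinor_univ (g : Perm α) : permMinor Finset.univ g = Perm.sign g := by
  rw [← Int.cast_id (n := (Perm.sign g : ℤ)), ← Matrix.det_permutation g]
  unfold permMinor
  congr 1
  ext i j : 2
  simp

lemma permMinor_empty (g : Perm α) : permMinor ∅ g = 1 := by
  rw [← Matrix.det_one (n := α)]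
  unfold permMinor
  congr 1

lemma permMinor_sumCongr (a : Perm α) (b : Perm β) :
    permMinor (Finset.univ.map Function.Embedding.inl) (Equiv.sumCongr a b) = Perm.sign a := by
  rw [← permMinor_univ, ← mul_one (permMinor _ a), ← Matrix.det_one (n := β)]
  unfold permMinor
  rw [← Matrix.det_fromBlocks_zero₂₁ _ 0]
  congr 1
  ext i j : 2
  rcases i with i | i <;> rcases j with j | j <;> simp [Matrix.one_apply]

lemma permPoly_natDegree_le (g : Perm α) : (permPoly g).natDegree ≤ Fintype.card α := by
  rw [permPoly_eq_sum]
  refine Polynomial.natDegree_sum_le_of_forall_le _ _ fun S _ => ?_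
  exact (natDegree_C_mul_X_pow_le _ _).trans (Finset.card_le_univ S)

lemma permPoly_coeff_zero (g : Perm α) : (permPoly g).coeff 0 = 1 := by
  simp [coeff_permPoly, permMinor_empty]

lemma one_add_X_dvd_permPoly [Nonempty α] (g : Perm α) : (1 + X : ℤ[X]) ∣ permPoly g := by
  have h : (X - C (-1 : ℤ)) ∣ permPoly g := by
    rw [Polynomial.dvd_iff_isRoot, Polynomial.IsRoot.def, permPoly, ← Polynomial.coe_evalRingHom,
      RingHom.map_det]
    rw [← Matrix.exists_mulVec_eq_zero_iff]
    refine ⟨fun _ => 1, fun h => one_ne_zero (congrFun h (Classical.arbitrary α)), ?_⟩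
    funext i
    simp only [mulVec, dotProduct, RingHom.mapMatrix_apply, Matrix.map_apply, Matrix.add_apply,
      Matrix.smul_apply, permMatrix_apply_eq, Matrix.one_apply]
    simp [Finset.sum_add_distrib, apply_ite (Polynomial.eval (-1 : ℤ))]
  simpa [add_comm] using h

lemma permPoly_finRotate {n : ℕ} (hn : n ≠ 0) : permPoly (finRotate n) = 1 - (-X) ^ n := by
  obtain ⟨m, rfl⟩ := Nat.exists_eq_succ_of_ne_zero hn
  have key : ∀ S : Finset (Fin (m + 1)), S ≠ ∅ → S ≠ Finset.univ →
      permMinor S (finRotate (m + 1)) = 0 := by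
    intro S h0 h1
    by_contra h
    have hcl : ∀ i ∈ S, finRotate (m + 1) i ∈ S := fun i hi => by
      by_contra hgi
      exact h (permMinor_eq_zero hi hgi)
    obtain ⟨x, hx⟩ := Finset.nonempty_iff_ne_empty.mpr h0
    have hx' : ∀ k : ℕ, x + Fin.ofNat (m + 1) k ∈ S := by
      intro k
      induction k with
      | zero => simpa using hx
      | succ k ih =>
        have := hcl _ ih
        rw [finRotate_apply] at this
        convert this using 1
        ext
        simp [Fin.val_add, add_assoc]
    refine h1 (Finset.eq_univ_iff_forall.mpr fun y => ?_)
    have := hx' (y - x).val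
    rwa [Fin.ofNat_val_eq_self, add_sub_cancel] at this
  rw [permPoly_eq_sum, Finset.sum_eq_add (∅ : Finset (Fin (m + 1))) Finset.univ]
  · simp only [permMinor_empty, permMinor_univ, sign_finRotate, Finset.card_univ,
      Fintype.card_fin]
    simp
    ring
  · exact (Finset.univ_nonempty.ne_empty).symm
  · intro S _ h
    simp [key S h.1 h.2]
  · simp
  · simp

end PermPoly

/-- The average of a function over a symmetric group. -/
noncomputable def permAvg {α : Type*} [Fintype α] [DecidableEq α] (f : Perm α → ℂ) : ℂ :=
  (Fintype.card (Perm α) : ℂ)⁻¹ * ∑ g, f g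

/-- Functions that are constant on conjugacy classes. -/
def IsClassFun {G : Type*} [Group G] (f : G → ℂ) : Prop := ∀ g h, f (h * g * h⁻¹) = f g

section Average

variable {α β γ : Type*} [Fintype α] [DecidableEq α] [Fintype β] [DecidableEq β]
  [Fintype γ] [DecidableEq γ]

lemma permAvg_congr {f f' : Perm α → ℂ} (h : ∀ g, f g = f' g) : permAvg f = permAvg f' := by
  rw [funext h]

lemma permAvg_sub (f f' : Perm α → ℂ) : permAvg (fun g => f g - f' g) = permAvg f - permAvg f' := by
  simp [permAvg, Finset.sum_sub_distrib, mul_sub]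

lemma permAvg_add (f f' : Perm α → ℂ) : permAvg (fun g => f g + f' g) = permAvg f + permAvg f' := by
  simp [permAvg, Finset.sum_add_distrib, mul_add]

lemma permAvg_const_mul (c : ℂ) (f : Perm α → ℂ) :
    permAvg (fun g => c * f g) = c * permAvg f := by
  simp only [permAvg, ← Finset.mul_sum]
  ring

lemma permAvg_sum {ι : Type*} (s : Finset ι) (f : ι → Perm α → ℂ) :
    permAvg (fun g => ∑ i ∈ s, f i g) = ∑ i ∈ s, permAvg (f i) := by
  simp only [permAvg, ← Finset.mul_sum]
  rw [Finset.sum_comm]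

lemma permAvg_one : permAvg (fun _ : Perm α => 1) = 1 := by
  have : (Fintype.card (Perm α) : ℂ) ≠ 0 := by exact_mod_cast Fintype.card_ne_zero
  simp [permAvg, this]

lemma permAvg_permCongr (ε : α ≃ β) (f : Perm β → ℂ) :
    permAvg (fun g => f (ε.permCongr g)) = permAvg f := by
  unfold permAvg
  rw [Fintype.card_congr ε.permCongr, Equiv.sum_comp ε.permCongr]

omit [Fintype α] [DecidableEq α] [Fintype β] [DecidableEq β] in
lemma IsClassFun.permCongr {f : Perm β → ℂ} (hf : IsClassFun f) (ε : α ≃ β) :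
    IsClassFun fun g => f (ε.permCongr g) := by
  intro g h
  have h1 : ε.permCongr (h * g * h⁻¹) =
      ε.permCongr h * ε.permCongr g * (ε.permCongr h)⁻¹ := by
    change ε.permCongrHom (h * g * h⁻¹) = _
    rw [map_mul, map_mul, map_inv]
    rfl
  simp only [h1, hf _ _]

lemma IsClassFun.mul {G : Type*} [Group G] {f f' : G → ℂ} (hf : IsClassFun f)
    (hf' : IsClassFun f') : IsClassFun fun g => f g * f' g := fun g h => by
  simp only [hf g h, hf' g h]

lemma permPoly_conj (g h : Perm α) : permPoly (h * g * h⁻¹) = permPoly g := by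
  rw [← permPoly_permCongr h g]
  congr 1

lemma isClassFun_sign : IsClassFun fun g : Perm α => ((Perm.sign g : ℤ) : ℂ) := fun g h => by
  have : Perm.sign (h * g * h⁻¹) = Perm.sign g := by
    rw [Perm.sign_mul, Perm.sign_mul, mul_right_comm, ← Perm.sign_mul]
    simp
  simp only [this]

lemma sum_mul_permMinor_eq {f : Perm α → ℂ} (hf : IsClassFun f) {S T : Finset α}
    (h : S.card = T.card) :
    ∑ g, f g * permMinor S g = ∑ g, f g * permMinor T g := by
  obtain ⟨e⟩ : Nonempty ({x // x ∈ S} ≃ {x // x ∈ T}) := ⟨Finset.equivOfCardEq h⟩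
  set ε : Perm α := e.extendSubtype with hε
  have hT : T = S.map ε.toEmbedding := by
    refine (Finset.eq_of_subset_of_card_le ?_ ?_).symm
    · intro x hx
      obtain ⟨y, hy, rfl⟩ := Finset.mem_map.mp hx
      exact e.extendSubtype_mem y hy
    · simp [h]
  rw [hT, ← Equiv.sum_comp ε.permCongr (fun g => f g * (permMinor (S.map _) g : ℂ))]
  refine Finset.sum_congr rfl fun g _ => ?_
  rw [permMinor_permCongr, show ε.permCongr g = ε * g * ε⁻¹ from rfl, hf]

lemma sum_mul_permMinor_inl (f : Perm (α ⊕ β) → ℂ) :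
    ∑ g, f g * permMinor (Finset.univ.map Function.Embedding.inl) g =
      ∑ x : Perm α × Perm β, (Perm.sign x.1 : ℤ) * f (Equiv.sumCongr x.1 x.2) := by
  symm
  refine Finset.sum_of_injOn (Perm.sumCongrHom α β) ?_ ?_ ?_ ?_
  · exact (Perm.sumCongrHom_injective).injOn
  · simp
  · intro g _ hg
    have h1 : ¬ Set.MapsTo g (Set.range Sum.inl) (Set.range Sum.inl) := fun h => by
      obtain ⟨x, rfl⟩ := Perm.mem_sumCongrHom_range_of_perm_mapsTo_inl h
      exact hg ⟨x, by simp⟩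
    simp only [Set.MapsTo, not_forall] at h1
    obtain ⟨x, ⟨a, rfl⟩, hx⟩ := h1
    rw [permMinor_eq_zero (i := Sum.inl a)]
    · simp
    · simp
    · simpa using hx
  · rintro ⟨a, b⟩ _
    simp only [Perm.sumCongrHom_apply]
    rw [permMinor_sumCongr, mul_comm]

/-- Frobenius reciprocity for the characters `(permPoly ·).coeff k`. -/
lemma permAvg_mul_coeff (ε : α ⊕ β ≃ γ) {f : Perm γ → ℂ} (hf : IsClassFun f) :
    permAvg (fun g => f g * ((permPoly g).coeff (Fintype.card α) : ℂ)) =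
      permAvg fun a : Perm α => (Perm.sign a : ℤ) *
        permAvg fun b : Perm β => f (ε.permCongr (Equiv.sumCongr a b)) := by
  rw [← permAvg_permCongr ε]
  have hf' := hf.permCongr ε
  generalize hF : (fun g => f (ε.permCongr g)) = F at hf'
  have hF' : ∀ g, f (ε.permCongr g) = F g := fun g => congrFun hF g
  simp only [hF', permPoly_permCongr, coeff_permPoly]
  unfold permAvg
  have h1 : ∀ S ∈ (Finset.univ : Finset (α ⊕ β)).powersetCard (Fintype.card α),
      ∑ g, F g * (permMinor S g : ℂ) = ∑ x : Perm α × Perm β,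
        (Perm.sign x.1 : ℤ) * F (Equiv.sumCongr x.1 x.2) := fun S hS => by
    rw [← sum_mul_permMinor_inl]
    apply sum_mul_permMinor_eq hf'
    rw [(Finset.mem_powersetCard.mp hS).2]
    simp
  have h2 : ∑ g, F g * ((∑ S ∈ (Finset.univ : Finset (α ⊕ β)).powersetCard (Fintype.card α),
      permMinor S g : ℤ) : ℂ) = (Fintype.card (α ⊕ β)).choose (Fintype.card α) *
        ∑ x : Perm α × Perm β, (Perm.sign x.1 : ℤ) * F (Equiv.sumCongr x.1 x.2) := by
    simp only [Int.cast_sum, Finset.mul_sum (s := Finset.powersetCard _ _)]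
    rw [Finset.sum_comm, Finset.sum_congr rfl h1]
    simp
  rw [h2, Fintype.sum_prod_type]
  simp only [Fintype.card_perm, Fintype.card_sum]
  have h3 := Nat.add_choose_mul_factorial_mul_factorial (Fintype.card α) (Fintype.card β)
  rw [← Nat.choose_symm_add] at h3
  rw [← h3]
  have h4 : ((Fintype.card α + Fintype.card β).choose (Fintype.card α) : ℂ) ≠ 0 := by
    exact_mod_cast (Nat.choose_pos (by omega)).ne'
  have h5 : ((Fintype.card α).factorial : ℂ) ≠ 0 := by exact_mod_cast Nat.factorial_ne_zero _
  have h6 : ((Fintype.card β).factorial : ℂ) ≠ 0 := by exact_mod_cast Nat.factorial_ne_zero _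
  push_cast
  simp only [mul_left_comm _ ((Fintype.card β).factorial : ℂ)⁻¹, ← Finset.mul_sum]
  field_simp

end Average

/-- The alternating sum `f k - f (k - 1) + ⋯ ± f 0`. -/
def altSum (f : ℕ → ℤ) : ℕ → ℤ
  | 0 => f 0
  | k + 1 => f (k + 1) - altSum f k

section ExtChar

variable {α β γ : Type*} [Fintype α] [DecidableEq α] [Fintype β] [DecidableEq β]
  [Fintype γ] [DecidableEq γ]

/-- The character of the `k`-th exterior power of the permutation representation. -/
noncomputable def extChar (k : ℕ) (g : Perm α) : ℤ := (permPoly g).coeff k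

/-- The character of the `k`-th exterior power of the standard representation. -/
noncomputable def hookChar (k : ℕ) (g : Perm α) : ℤ := altSum (extChar · g) k

/-- The alternating sum of the characters `hookChar`; it restricts to `hookChar` on point
stabilizers. -/
noncomputable def hookSum (k : ℕ) (g : Perm α) : ℤ := altSum (hookChar · g) k

lemma extChar_zero (g : Perm α) : extChar 0 g = 1 := permPoly_coeff_zero g

lemma hookChar_zero (g : Perm α) : hookChar 0 g = 1 := permPoly_coeff_zero g

lemma hookChar_succ (k : ℕ) (g : Perm α) :
    hookChar (k + 1) g = extChar (k + 1) g - hookChar k g := rfl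

lemma hookSum_zero (g : Perm α) : hookSum 0 g = 1 := permPoly_coeff_zero g

lemma hookSum_succ (k : ℕ) (g : Perm α) :
    hookSum (k + 1) g = hookChar (k + 1) g - hookSum k g := rfl

lemma extChar_conj (k : ℕ) (g h : Perm α) : extChar k (h * g * h⁻¹) = extChar k g := by
  simp only [extChar, permPoly_conj]

lemma hookChar_conj (k : ℕ) (g h : Perm α) : hookChar k (h * g * h⁻¹) = hookChar k g := by
  simp only [hookChar, extChar_conj]

lemma hookSum_conj (k : ℕ) (g h : Perm α) : hookSum k (h * g * h⁻¹) = hookSum k g := by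
  simp only [hookSum, hookChar_conj]

lemma isClassFun_extChar (k : ℕ) : IsClassFun fun g : Perm α => (extChar k g : ℂ) :=
  fun g h => by simp only [extChar_conj]

lemma isClassFun_hookChar (k : ℕ) : IsClassFun fun g : Perm α => (hookChar k g : ℂ) :=
  fun g h => by simp only [hookChar_conj]

lemma isClassFun_hookSum (k : ℕ) : IsClassFun fun g : Perm α => (hookSum k g : ℂ) :=
  fun g h => by simp only [hookSum_conj]

lemma extChar_permCongr (ε : α ≃ β) (k : ℕ) (g : Perm α) :
    extChar k (ε.permCongr g) = extChar k g := by
  simp only [extChar, permPoly_permCongr]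

lemma hookChar_permCongr (ε : α ≃ β) (k : ℕ) (g : Perm α) :
    hookChar k (ε.permCongr g) = hookChar k g := by
  simp only [hookChar, extChar_permCongr]

lemma hookSum_permCongr (ε : α ≃ β) (k : ℕ) (g : Perm α) :
    hookSum k (ε.permCongr g) = hookSum k g := by
  simp only [hookSum, hookChar_permCongr]

lemma extChar_eq_zero_of_card_lt {k : ℕ} (hk : Fintype.card α < k) (g : Perm α) :
    extChar k g = 0 :=
  coeff_eq_zero_of_natDegree_lt ((permPoly_natDegree_le g).trans_lt hk)

lemma permAvg_sign : permAvg (fun a : Perm α => ((Perm.sign a : ℤ) : ℂ)) =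
    if Fintype.card α ≤ 1 then 1 else 0 := by
  split_ifs with h
  · have : Subsingleton α := Fintype.card_le_one_iff_subsingleton.mp h
    rw [← permAvg_one (α := α)]
    refine permAvg_congr fun g => ?_
    rw [Subsingleton.elim g 1]
    simp
  · have : Nontrivial α := Fintype.one_lt_card_iff_nontrivial.mp (by omega)
    obtain ⟨x, y, hxy⟩ := exists_pair_ne α
    unfold permAvg
    rw [mul_eq_zero]
    right
    have h1 := Equiv.sum_comp (Equiv.mulLeft (swap x y))
      (fun a : Perm α => ((Perm.sign a : ℤ) : ℂ))
    simp only [coe_mulLeft, Perm.sign_mul, Perm.sign_swap hxy] at h1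
    simp only [neg_mul, one_mul, Units.val_neg, Int.cast_neg, Finset.sum_neg_distrib] at h1
    linear_combination (-1 / 2 : ℂ) * h1

lemma permAvg_extChar (k : ℕ) : permAvg (fun g : Perm α => (extChar k g : ℂ)) =
    if k = 0 ∨ (k = 1 ∧ Fintype.card α ≠ 0) then 1 else 0 := by
  rcases lt_or_ge (Fintype.card α) k with h | h
  · rw [if_neg (by omega)]
    simp [permAvg, extChar_eq_zero_of_card_lt h]
  · have ε : Fin k ⊕ Fin (Fintype.card α - k) ≃ α :=
      Fintype.equivOfCardEq (by simp; omega)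
    have := permAvg_mul_coeff ε (f := fun _ => 1) (fun _ _ => rfl)
    simp only [one_mul, Fintype.card_fin, permAvg_one, mul_one, permAvg_sign] at this
    unfold extChar
    rw [this]
    congr 1
    simp only [eq_iff_iff]
    omega

lemma permAvg_sign_mul_extChar (k : ℕ) :
    permAvg (fun g : Perm α => ((Perm.sign g : ℤ) : ℂ) * (extChar k g : ℂ)) =
      if k = Fintype.card α ∨ k + 1 = Fintype.card α then 1 else 0 := by
  rcases lt_or_ge (Fintype.card α) k with h | h
  · rw [if_neg (by omega)]
    simp [permAvg, extChar_eq_zero_of_card_lt h]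
  · have ε : Fin k ⊕ Fin (Fintype.card α - k) ≃ α :=
      Fintype.equivOfCardEq (by simp; omega)
    have := permAvg_mul_coeff ε (f := fun g => ((Perm.sign g : ℤ) : ℂ)) isClassFun_sign
    simp only [Fintype.card_fin, Perm.sign_permCongr, Perm.sign_sumCongr, Units.val_mul,
      Int.cast_mul, permAvg_const_mul, permAvg_sign, ← mul_assoc, Int.cast_mul] at this
    unfold extChar
    rw [this]
    have h1 : ∀ a : Perm (Fin k), ((Perm.sign a : ℤ) : ℂ) * ((Perm.sign a : ℤ) : ℂ) = 1 := by
      intro a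
      rw [← Int.cast_mul, ← Units.val_mul, Int.units_mul_self]
      simp
    simp only [h1, one_mul]
    rw [← mul_one (ite _ _ _), permAvg_const_mul]
    rw [permAvg_one, mul_one]
    congr 1
    simp only [eq_iff_iff]
    omega

lemma extChar_sumCongr (k : ℕ) (a : Perm α) (b : Perm β) : extChar k (Equiv.sumCongr a b) =
    ∑ x ∈ Finset.HasAntidiagonal.antidiagonal k, extChar x.1 a * extChar x.2 b := by
  simp only [extChar, permPoly_sumCongr, coeff_mul]

lemma permAvg_extChar_mul_extChar {j : ℕ} (hj : j ≤ Fintype.card α) (k : ℕ) :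
    permAvg (fun g : Perm α => (extChar j g : ℂ) * (extChar k g : ℂ)) =
      ∑ x ∈ Finset.HasAntidiagonal.antidiagonal k, (if x.1 = j ∨ x.1 + 1 = j then 1 else 0) *
        (if x.2 = 0 ∨ (x.2 = 1 ∧ Fintype.card α ≠ j) then 1 else 0) := by
  have ε : Fin j ⊕ Fin (Fintype.card α - j) ≃ α := Fintype.equivOfCardEq (by simp; omega)
  have h := permAvg_mul_coeff ε (isClassFun_extChar k)
  simp only [Fintype.card_fin] at h
  rw [permAvg_congr fun g => mul_comm (extChar j g : ℂ) (extChar k g : ℂ)]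
  refine h.trans ?_
  simp only [extChar_permCongr, extChar_sumCongr, Int.cast_sum, Int.cast_mul, permAvg_sum,
    permAvg_const_mul, permAvg_extChar, Finset.mul_sum, ← mul_assoc]
  refine Finset.sum_congr rfl fun x _ => ?_
  rw [permAvg_congr fun a => mul_comm _ _, permAvg_const_mul, permAvg_sign_mul_extChar, mul_comm,
    Fintype.card_fin, Fintype.card_fin]
  congr 2
  simp only [eq_iff_iff]
  omega

lemma sum_antidiagonal_mul_indicator (f : ℕ → ℂ) (P : Prop) [Decidable P] (k : ℕ) :
    ∑ x ∈ Finset.HasAntidiagonal.antidiagonal k,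
        f x.1 * (if x.2 = 0 ∨ (x.2 = 1 ∧ P) then 1 else 0) =
      f k + if P ∧ k ≠ 0 then f (k - 1) else 0 := by
  rcases k with _ | k
  · simp
  · rw [Finset.Nat.sum_antidiagonal_succ']
    rcases k with _ | k
    · simp
    · rw [Finset.Nat.sum_antidiagonal_succ']
      simp

lemma permAvg_extChar_mul_extChar_of_lt {j : ℕ} (hj : j ≠ 0) (hj' : j < Fintype.card α) (k : ℕ) :
    permAvg (fun g : Perm α => (extChar j g : ℂ) * (extChar k g : ℂ)) =
      (if k + 1 = j then 1 else 0) + (if k = j then 2 else 0) + if k = j + 1 then 1 else 0 := by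
  rw [permAvg_extChar_mul_extChar hj'.le, sum_antidiagonal_mul_indicator
    (fun u => if u = j ∨ u + 1 = j then 1 else 0)]
  split_ifs <;> first | omega | norm_num

lemma permAvg_hookChar_mul_extChar {j : ℕ} (hj : j < Fintype.card α) (k : ℕ) :
    permAvg (fun g : Perm α => (hookChar j g : ℂ) * (extChar k g : ℂ)) =
      (if k = j then 1 else 0) + if k = j + 1 then 1 else 0 := by
  induction j with
  | zero =>
    simp only [hookChar_zero, Int.cast_one, one_mul, permAvg_extChar]
    split_ifs <;> first | omega | norm_num
  | succ j ih =>
    simp only [hookChar_succ, Int.cast_sub, sub_mul]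
    rw [permAvg_sub, ih (by omega), permAvg_extChar_mul_extChar_of_lt (by omega) hj]
    split_ifs <;> first | omega | norm_num

lemma permAvg_hookChar_mul_hookChar {j : ℕ} (hj : j < Fintype.card α) (k : ℕ) :
    permAvg (fun g : Perm α => (hookChar j g : ℂ) * (hookChar k g : ℂ)) =
      if k = j then 1 else 0 := by
  induction k with
  | zero =>
    have := permAvg_hookChar_mul_extChar hj 0
    simp only [extChar_zero] at this
    simp only [hookChar_zero, this]
    simp
  | succ k ih =>
    simp only [hookChar_succ k, Int.cast_sub, mul_sub]
    rw [permAvg_sub, ih, permAvg_hookChar_mul_extChar hj]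
    split_ifs <;> first | omega | norm_num

end ExtChar

section Restriction

variable {α β γ : Type*} [Fintype α] [DecidableEq α] [Fintype β] [DecidableEq β]
  [Fintype γ] [DecidableEq γ]

lemma permPoly_fin_one (a : Perm (Fin 1)) : permPoly a = 1 + X := by
  rw [Subsingleton.elim a (finRotate 1), permPoly_finRotate one_ne_zero]
  simp

lemma extChar_succ_sumCongr (k : ℕ) (a : Perm (Fin 1)) (b : Perm β) :
    extChar (k + 1) (Equiv.sumCongr a b) = extChar (k + 1) b + extChar k b := by
  simp only [extChar, permPoly_sumCongr, permPoly_fin_one, add_mul, one_mul, coeff_add,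
    coeff_X_mul]

lemma hookChar_sumCongr (k : ℕ) (a : Perm (Fin 1)) (b : Perm β) :
    hookChar k (Equiv.sumCongr a b) = extChar k b := by
  induction k with
  | zero => rw [hookChar_zero, extChar_zero]
  | succ k ih => rw [hookChar_succ, ih, extChar_succ_sumCongr, add_sub_cancel_right]

lemma hookSum_sumCongr (k : ℕ) (a : Perm (Fin 1)) (b : Perm β) :
    hookSum k (Equiv.sumCongr a b) = hookChar k b := by
  induction k with
  | zero => rw [hookSum_zero, hookChar_zero]
  | succ k ih => rw [hookSum_succ, ih, hookChar_sumCongr, hookChar_succ]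

lemma permAvg_mul_extChar_one (ε : Fin 1 ⊕ β ≃ γ) {f : Perm γ → ℂ} (hf : IsClassFun f) :
    permAvg (fun g => f g * (extChar 1 g : ℂ)) =
      permAvg fun b : Perm β => f (ε.permCongr (Equiv.sumCongr 1 b)) := by
  refine (permAvg_mul_coeff ε hf).trans ?_
  rw [permAvg_congr (f' := fun _ : Perm (Fin 1) =>
    permAvg (fun b : Perm β => f (ε.permCongr (Equiv.sumCongr 1 b))) * 1), permAvg_const_mul,
    permAvg_one, mul_one]
  intro g
  rw [Subsingleton.elim g 1]
  simp

/-- The character of the irreducible representation attached to `(n - k - 1, 2, 1^(k - 1))`. -/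
noncomputable def nearHookChar (k : ℕ) (g : Perm α) : ℤ :=
  extChar 1 g * hookSum k g - extChar (k + 1) g

lemma permAvg_nearHookChar_mul_self {k : ℕ} (hk : k ≠ 0) (hk' : k + 2 ≤ Fintype.card α) :
    permAvg (fun g : Perm α => (nearHookChar k g : ℂ) * (nearHookChar k g : ℂ)) =
      if k + 2 = Fintype.card α then 0 else 1 := by
  have ε : Fin 1 ⊕ Fin (Fintype.card α - 1) ≃ α := Fintype.equivOfCardEq (by simp; omega)
  have ε' : Fin 1 ⊕ Fin (Fintype.card α - 2) ≃ Fin (Fintype.card α - 1) :=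
    Fintype.equivOfCardEq (by simp; omega)
  have hθ := isClassFun_hookSum (α := α) k
  have hψ := isClassFun_hookChar (α := Fin (Fintype.card α - 1)) k
  have h1 := permAvg_mul_extChar_one ε ((hθ.mul hθ).mul (isClassFun_extChar 1))
  have h2 := permAvg_mul_extChar_one ε (hθ.mul (isClassFun_extChar (k + 1)))
  have h3 := permAvg_mul_extChar_one ε' (hψ.mul hψ)
  simp only [hookSum_permCongr, hookSum_sumCongr, hookChar_permCongr, hookChar_sumCongr,
    extChar_permCongr, extChar_succ_sumCongr k, extChar_succ_sumCongr 0, extChar_zero,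
    zero_add, Int.cast_add, Int.cast_one, mul_add, mul_one, permAvg_add] at h1 h2 h3
  rw [permAvg_hookChar_mul_hookChar (by simp; omega), h3] at h1
  rw [permAvg_hookChar_mul_extChar (by simp; omega),
    permAvg_hookChar_mul_extChar (by simp; omega)] at h2
  have h4 := permAvg_extChar_mul_extChar_of_lt (α := α) (j := k + 1) (by omega) (by omega) (k + 1)
  have h5 : permAvg (fun g : Perm (Fin (Fintype.card α - 2)) =>
      (extChar k g : ℂ) * (extChar k g : ℂ)) = if k + 2 = Fintype.card α then 1 else 2 := by
    rw [permAvg_extChar_mul_extChar (by simp; omega), sum_antidiagonal_mul_indicator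
      (fun u => if u = k ∨ u + 1 = k then 1 else 0)]
    simp only [Fintype.card_fin]
    split_ifs <;> first | omega | (norm_num; done) | simp_all
  rw [h5] at h1
  have h6 : ∀ g : Perm α, (nearHookChar k g : ℂ) * (nearHookChar k g : ℂ) =
      (hookSum k g : ℂ) * hookSum k g * extChar 1 g * extChar 1 g -
        2 * ((hookSum k g : ℂ) * extChar (k + 1) g * extChar 1 g) +
        (extChar (k + 1) g : ℂ) * extChar (k + 1) g := by
    intro g
    simp only [nearHookChar]
    push_cast
    ring
  rw [permAvg_congr h6, permAvg_add, permAvg_sub, permAvg_const_mul, h1, h2, h4]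
  split_ifs <;> first | omega | norm_num

lemma hookSum_mul_extChar_one (k : ℕ) (g : Perm α) :
    extChar 1 g * hookSum k g =
      nearHookChar k g + hookChar k g + hookChar (k + 1) g := by
  rw [nearHookChar, hookChar_succ]
  ring

end Restriction

section NormOne

variable {α : Type*} [Fintype α] [DecidableEq α]

lemma sum_normSq_sub (χ : Perm α → ℂ) (h : Perm α → ℤ) (a N : ℤ)
    (hχ : permAvg (fun g => χ g * starRingEnd ℂ (χ g)) = 1)
    (hh : permAvg (fun g => (h g : ℂ) * h g) = N)
    (ha : permAvg (fun g => χ g * h g) = a) (b : ℤ) :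
    ∑ g, Complex.normSq (χ g - b * h g) =
      Fintype.card (Perm α) * (1 - 2 * a * b + b ^ 2 * N : ℝ) := by
  have hN : (Fintype.card (Perm α) : ℂ) ≠ 0 := by exact_mod_cast Fintype.card_ne_zero
  have ha' : permAvg (fun g => starRingEnd ℂ (χ g) * h g) = a := by
    have := congrArg (starRingEnd ℂ) ha
    simpa [permAvg, map_sum, map_mul] using this
  have key : permAvg (fun g => ((Complex.normSq (χ g - b * h g) : ℝ) : ℂ)) =
      1 - 2 * a * b + b ^ 2 * N := by
    have h1 : ∀ g, ((Complex.normSq (χ g - b * h g) : ℝ) : ℂ) =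
        χ g * starRingEnd ℂ (χ g) - b * (χ g * h g) - b * (starRingEnd ℂ (χ g) * h g) +
          (b : ℂ) ^ 2 * ((h g : ℂ) * h g) := fun g => by
      rw [← Complex.mul_conj]
      simp only [map_sub, map_mul, map_intCast]
      ring
    rw [permAvg_congr h1, permAvg_add, permAvg_sub, permAvg_sub, permAvg_const_mul,
      permAvg_const_mul, permAvg_const_mul, hχ, hh, ha, ha']
    ring
  rw [permAvg, inv_mul_eq_iff_eq_mul₀ hN] at key
  exact_mod_cast key

lemma eq_int_mul_of_permAvg_ne_zero {χ : Perm α → ℂ} {h : Perm α → ℤ} {a : ℤ}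
    (hχ : permAvg (fun g => χ g * starRingEnd ℂ (χ g)) = 1)
    (hh : permAvg (fun g => (h g : ℂ) * h g) = 1)
    (ha : permAvg (fun g => χ g * h g) = a) (ha0 : a ≠ 0) :
    (a = 1 ∨ a = -1) ∧ ∀ g, χ g = a * h g := by
  have hs := sum_normSq_sub χ h a 1 hχ (by simpa using hh) ha a
  have hpos : (0 : ℝ) < Fintype.card (Perm α) := by exact_mod_cast Fintype.card_pos
  have h0 : 0 ≤ ∑ g, Complex.normSq (χ g - a * h g) :=
    Finset.sum_nonneg fun g _ => Complex.normSq_nonneg _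
  have h1 : (0 : ℝ) ≤ 1 - 2 * a * a + a ^ 2 * (1 : ℤ) := by
    rw [hs] at h0
    exact nonneg_of_mul_nonneg_right h0 hpos
  have h2 : a ^ 2 ≤ 1 := by
    have : (a : ℝ) ^ 2 ≤ 1 := by
      push_cast at h1
      linarith
    exact_mod_cast this
  have h3 : a = 1 ∨ a = -1 := by
    have h4 : a ≤ 1 := by nlinarith
    have h5 : -1 ≤ a := by nlinarith
    omega
  refine ⟨h3, fun g => ?_⟩
  have h4 : ∑ g, Complex.normSq (χ g - a * h g) = 0 := by
    rw [hs]
    rcases h3 with rfl | rfl <;> norm_num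
  rw [Finset.sum_eq_zero_iff_of_nonneg fun g _ => Complex.normSq_nonneg _] at h4
  exact sub_eq_zero.mp (Complex.normSq_eq_zero.mp (h4 g (Finset.mem_univ g)))

lemma eq_zero_of_permAvg_mul_self_eq_zero {h : Perm α → ℤ}
    (hh : permAvg (fun g => (h g : ℂ) * h g) = 0) (g : Perm α) : h g = 0 := by
  have hN : (Fintype.card (Perm α) : ℂ) ≠ 0 := by exact_mod_cast Fintype.card_ne_zero
  rw [permAvg, mul_eq_zero, or_iff_right (inv_ne_zero hN)] at hh
  have h1 : ∑ g, h g * h g = 0 := by exact_mod_cast hh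
  rw [Finset.sum_eq_zero_iff_of_nonneg fun g _ => mul_self_nonneg _] at h1
  exact mul_self_eq_zero.mp (h1 g (Finset.mem_univ g))

end NormOne

section FullCycle

variable {α : Type*} [Fintype α] [DecidableEq α]

lemma hookChar_eq_coeff {g : Perm α} {q : ℤ[X]} (hq : permPoly g = (1 + X) * q) (k : ℕ) :
    hookChar k g = q.coeff k := by
  induction k with
  | zero =>
    rw [hookChar_zero, ← permPoly_coeff_zero g, hq]
    simp
  | succ k ih =>
    rw [hookChar_succ, ih, extChar, hq, add_mul, one_mul, coeff_add, coeff_X_mul,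
      add_sub_cancel_right]

lemma sum_neg_one_pow_mul_hookChar {g : Perm α} {q : ℤ[X]} (hq : permPoly g = (1 + X) * q) :
    ∑ k ∈ Finset.range (Fintype.card α), (-1) ^ k * hookChar k g = q.eval (-1) := by
  have h0 : permPoly g ≠ 0 := fun h => by simpa [h] using permPoly_coeff_zero g
  have h1 : q ≠ 0 := by
    rintro rfl
    exact h0 (by simpa using hq)
  have h2 := permPoly_natDegree_le g
  have hX : (1 + X : ℤ[X]).natDegree = 1 := by
    rw [add_comm]
    exact natDegree_X_add_C (1 : ℤ)
  have h3 : (1 + X : ℤ[X]) ≠ 0 := fun h => by simp [h] at hX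
  rw [hq, natDegree_mul h3 h1, hX] at h2
  rw [Polynomial.eval_eq_sum_range' (n := Fintype.card α) (by omega)]
  refine Finset.sum_congr rfl fun k _ => ?_
  rw [hookChar_eq_coeff hq, mul_comm]

lemma sum_neg_one_pow_mul_hookChar_eq_zero {g : Perm α} {x y : α} (h : ¬ g.SameCycle x y) :
    ∑ k ∈ Finset.range (Fintype.card α), (-1) ^ k * hookChar k g = 0 := by
  classical
  have hp : ∀ z, g.SameCycle x (g z) ↔ g.SameCycle x z := fun z => Perm.sameCycle_apply_right
  have hp' : ∀ z, ¬ g.SameCycle x (g z) ↔ ¬ g.SameCycle x z := fun z => not_congr (hp z)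
  have h1 : permPoly g = permPoly (g.subtypePerm hp) *
      permPoly (g.subtypePerm (p := fun z => ¬ g.SameCycle x z) hp') := by
    rw [← permPoly_sumCongr, ← permPoly_permCongr (Equiv.sumCompl fun z => g.SameCycle x z)]
    congr 1
    ext z
    by_cases hz : g.SameCycle x z
    · rw [Equiv.permCongr_apply, Equiv.sumCompl_symm_apply_of_pos hz]
      rfl
    · rw [Equiv.permCongr_apply, Equiv.sumCompl_symm_apply_of_neg hz]
      rfl
  have : Nonempty {z // g.SameCycle x z} := ⟨⟨x, Perm.SameCycle.refl g x⟩⟩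
  have : Nonempty {z // ¬ g.SameCycle x z} := ⟨⟨y, h⟩⟩
  obtain ⟨u, hu⟩ := one_add_X_dvd_permPoly (g.subtypePerm hp)
  obtain ⟨v, hv⟩ := one_add_X_dvd_permPoly (g.subtypePerm (p := fun z => ¬ g.SameCycle x z) hp')
  rw [sum_neg_one_pow_mul_hookChar (q := u * ((1 + X) * v)) (by rw [h1, hu, hv]; ring)]
  simp

lemma isConj_finRotate {n : ℕ} (hn : 2 ≤ n) {g : Perm (Fin n)}
    (h : ∀ x y, g.SameCycle x y) : IsConj (finRotate n) g := by
  rw [Perm.isConj_iff_cycleType_eq, cycleType_finRotate_of_le hn]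
  have : Nontrivial (Fin n) := Fin.nontrivial_iff_two_le.mpr hn
  have hg : ∀ x, g x ≠ x := fun x hx => by
    obtain ⟨y, hy⟩ := exists_ne x
    exact hy ((h x y).eq_of_left hx).symm
  have hc : g.IsCycle := ⟨⟨0, by omega⟩, hg _, fun y _ => h _ y⟩
  rw [hc.cycleType]
  congr 1
  have : g.support = Finset.univ := by
    ext x
    simp [hg x]
  simp [this]

lemma exists_permAvg_mul_hookChar_ne_zero {n : ℕ} (hn : 2 ≤ n) {χ : Perm (Fin n) → ℂ}
    (hχ : IsClassFun χ) (h0 : χ (finRotate n) ≠ 0) :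
    ∃ k < n, permAvg (fun g => χ g * hookChar k g) ≠ 0 := by
  by_contra! h
  have h1 : permAvg (fun g : Perm (Fin n) => χ g *
      ((∑ k ∈ Finset.range n, (-1) ^ k * hookChar k g : ℤ) : ℂ)) = 0 := by
    simp only [Int.cast_sum, Finset.mul_sum, permAvg_sum]
    refine Finset.sum_eq_zero fun k hk => ?_
    rw [permAvg_congr (f' := fun g => (-1) ^ k * (χ g * hookChar k g)), permAvg_const_mul,
      h k (Finset.mem_range.mp hk), mul_zero]
    intro g
    push_cast
    ring
  have h2 : permAvg (fun g : Perm (Fin n) => χ g *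
      ((∑ k ∈ Finset.range n, (-1) ^ k * hookChar k g : ℤ) : ℂ)) =
      χ (finRotate n) * permAvg (fun g : Perm (Fin n) =>
        ((∑ k ∈ Finset.range n, (-1) ^ k * hookChar k g : ℤ) : ℂ)) := by
    rw [← permAvg_const_mul]
    refine permAvg_congr fun g => ?_
    by_cases hg : ∀ x y, g.SameCycle x y
    · obtain ⟨c, hc⟩ := isConj_iff.mp (isConj_finRotate hn hg)
      rw [← hc, hχ]
    · push Not at hg
      obtain ⟨x, y, hxy⟩ := hg
      have := sum_neg_one_pow_mul_hookChar_eq_zero hxy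
      rw [Fintype.card_fin] at this
      simp [this]
  have h3 : permAvg (fun g : Perm (Fin n) =>
      ((∑ k ∈ Finset.range n, (-1) ^ k * hookChar k g : ℤ) : ℂ)) = 1 := by
    simp only [Int.cast_sum, permAvg_sum]
    rw [Finset.sum_eq_single_of_mem 0 (by simp; omega)]
    · simp [hookChar_zero, permAvg_one]
    · intro k _ hk
      have := permAvg_hookChar_mul_hookChar (α := Fin n) (j := 0) (by simp; omega) k
      simp only [hookChar_zero, Int.cast_one, one_mul, hk, if_false] at this
      simp only [Int.cast_mul, permAvg_const_mul, this, mul_zero]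
  rw [h2, h3, mul_one] at h1
  exact h0 h1

end FullCycle

section CharacterConj

open scoped ComplexOrder

variable {G V : Type*} [Group G] [Fintype G] [AddCommGroup V] [Module ℂ V]
  [FiniteDimensional ℂ V]

lemma character_inv_eq_conj (ρ : Representation ℂ G V) (g : G) :
    ρ.character g⁻¹ = starRingEnd ℂ (ρ.character g) := by
  classical
  set b := Module.finBasis ℂ V
  set M : G → Matrix _ _ ℂ := fun g => LinearMap.toMatrix b b (ρ g) with hM
  have hmul : ∀ g h, M (g * h) = M g * M h := fun g h => by
    simp only [hM, map_mul, LinearMap.toMatrix_mul]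
  have hone : M 1 = 1 := by simp [hM]
  have htr : ∀ g, ρ.character g = (M g).trace := fun g =>
    LinearMap.trace_eq_matrix_trace ℂ b (ρ g)
  set H := ∑ h, (M h)ᴴ * M h with hH
  have hinv : (M g)ᴴ * H * M g = H := by
    rw [hH, Finset.mul_sum, Finset.sum_mul,
      ← Equiv.sum_comp (Equiv.mulRight g) (fun h => (M h)ᴴ * M h)]
    refine Finset.sum_congr rfl fun h _ => ?_
    simp only [Equiv.coe_mulRight, hmul, conjTranspose_mul, Matrix.mul_assoc]
  have hpos : H.PosDef := by
    rw [hH, ← Finset.add_sum_erase _ _ (Finset.mem_univ (1 : G))]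
    refine Matrix.PosDef.add_posSemidef ?_ ?_
    · rw [hone]
      simpa using Matrix.PosDef.one
    · exact Matrix.posSemidef_sum _ fun h _ => Matrix.posSemidef_conjTranspose_mul_self _
  have hu : IsUnit H.det := (Matrix.isUnit_iff_isUnit_det _).mp hpos.isUnit
  have hgg : M g * M g⁻¹ = 1 := by rw [← hmul, mul_inv_cancel, hone]
  have h1 : (M g)ᴴ = H * M g⁻¹ * H⁻¹ := by
    rw [← hinv, Matrix.mul_assoc ((M g)ᴴ * H), hgg, Matrix.mul_one, hinv,
      Matrix.mul_nonsing_inv_cancel_right _ _ hu]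
  rw [htr, htr, starRingEnd_apply, ← Matrix.trace_conjTranspose, h1, Matrix.trace_mul_comm,
    Matrix.nonsing_inv_mul_cancel_left _ _ hu]

end CharacterConj

section Integrality

variable {α β γ V : Type*} [Fintype α] [DecidableEq α] [Fintype β] [DecidableEq β]
  [Fintype γ] [DecidableEq γ] [AddCommGroup V] [Module ℂ V] [FiniteDimensional ℂ V]

omit [FiniteDimensional ℂ V] in
lemma isClassFun_character {G : Type*} [Group G] (ρ : Representation ℂ G V) :
    IsClassFun ρ.character := fun g h => ρ.char_conj g h

/-- The inclusion of a Young subgroup with two factors. -/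
def youngHom (ε : α ⊕ β ≃ γ) : Perm α × Perm β →* Perm γ :=
  ε.permCongrHom.toMonoidHom.comp (Perm.sumCongrHom α β)

omit [Fintype α] [DecidableEq α] [Fintype β] [DecidableEq β] [Fintype γ] [DecidableEq γ] in
lemma youngHom_apply (ε : α ⊕ β ≃ γ) (x : Perm α × Perm β) :
    youngHom ε x = ε.permCongr (Equiv.sumCongr x.1 x.2) := rfl

/-- The representation `sgn ⊗ ρ` of a Young subgroup, the sign being that of the first factor. -/
noncomputable def signTwist (ρ : Representation ℂ (Perm γ) V) (ε : α ⊕ β ≃ γ) :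
    Representation ℂ (Perm α × Perm β) V where
  toFun x := ((Perm.sign x.1 : ℤ) : ℂ) • ρ (youngHom ε x)
  map_one' := by simp
  map_mul' x y := by
    simp only [map_mul, Prod.fst_mul, Units.val_mul, Int.cast_mul, smul_mul_smul_comm]

omit [Fintype β] [DecidableEq β] [Fintype γ] [DecidableEq γ] [FiniteDimensional ℂ V] in
lemma character_signTwist (ρ : Representation ℂ (Perm γ) V) (ε : α ⊕ β ≃ γ)
    (x : Perm α × Perm β) : (signTwist ρ ε).character x =
      (Perm.sign x.1 : ℤ) * ρ.character (ε.permCongr (Equiv.sumCongr x.1 x.2)) := by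
  rw [← youngHom_apply]
  simp [Representation.character, signTwist]

lemma exists_int_permAvg_character_mul_extChar (ρ : Representation ℂ (Perm γ) V) (k : ℕ) :
    ∃ a : ℤ, permAvg (fun g => ρ.character g * extChar k g) = a := by
  rcases lt_or_ge (Fintype.card γ) k with h | h
  · exact ⟨0, by simp [permAvg, extChar_eq_zero_of_card_lt h]⟩
  · have ε : Fin k ⊕ Fin (Fintype.card γ - k) ≃ γ := Fintype.equivOfCardEq (by simp; omega)
    have h1 := permAvg_mul_coeff ε (isClassFun_character ρ)
    rw [Fintype.card_fin] at h1
    have : Invertible (Nat.card (Perm (Fin k) × Perm (Fin (Fintype.card γ - k))) : ℂ) :=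
      invertibleOfNonzero (by exact_mod_cast Nat.card_pos.ne')
    have h2 := (signTwist ρ ε).card_inv_mul_sum_char_eq_finrank
    refine ⟨_, h1.trans (Eq.trans ?_ (h2.trans (Int.cast_natCast _).symm))⟩
    rw [Nat.card_prod, Fintype.sum_prod_type, Nat.cast_mul, mul_inv, Nat.card_eq_fintype_card,
      Nat.card_eq_fintype_card]
    simp only [permAvg, character_signTwist, Finset.mul_sum]
    refine Finset.sum_congr rfl fun a _ => Finset.sum_congr rfl fun b _ => ?_
    ring

lemma exists_int_permAvg_character_mul_hookChar (ρ : Representation ℂ (Perm γ) V) (k : ℕ) :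
    ∃ a : ℤ, permAvg (fun g => ρ.character g * hookChar k g) = a := by
  induction k with
  | zero => simpa only [hookChar_zero, extChar_zero] using
      exists_int_permAvg_character_mul_extChar ρ 0
  | succ k ih =>
    obtain ⟨a, ha⟩ := ih
    obtain ⟨b, hb⟩ := exists_int_permAvg_character_mul_extChar ρ (k + 1)
    exact ⟨b - a, by simp only [hookChar_succ, Int.cast_sub, mul_sub, permAvg_sub, ha, hb]⟩

lemma permAvg_mul_extChar_one_mul_hookSum (ε : Fin 1 ⊕ β ≃ γ) {χ : Perm γ → ℂ}
    (hχ : IsClassFun χ) (k : ℕ) :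
    permAvg (fun g => χ g * ((extChar 1 g * hookSum k g : ℤ) : ℂ)) =
      permAvg fun b => χ (ε.permCongr (Equiv.sumCongr 1 b)) * hookChar k b := by
  have h := permAvg_mul_extChar_one ε (hχ.mul (isClassFun_hookSum k))
  simp only [hookSum_permCongr, hookSum_sumCongr] at h
  rw [← h]
  refine permAvg_congr fun g => ?_
  push_cast
  ring

lemma exists_int_permAvg_character_mul_nearHookChar (ρ : Representation ℂ (Perm γ) V)
    (h : Fintype.card γ ≠ 0) (k : ℕ) :
    ∃ a : ℤ, permAvg (fun g => ρ.character g * nearHookChar k g) = a := by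
  have ε : Fin 1 ⊕ Fin (Fintype.card γ - 1) ≃ γ := Fintype.equivOfCardEq (by simp; omega)
  obtain ⟨a, ha⟩ := exists_int_permAvg_character_mul_extChar ρ (k + 1)
  obtain ⟨b, hb⟩ := exists_int_permAvg_character_mul_hookChar 
    (ρ.comp ((youngHom ε).comp (MonoidHom.inr _ _))) k
  have h1 := permAvg_mul_extChar_one_mul_hookSum ε (isClassFun_character ρ) k
  refine ⟨b - a, ?_⟩
  rw [Int.cast_sub, ← ha, ← hb]
  refine Eq.trans ?_ (congrArg₂ _ h1 rfl)
  rw [← permAvg_sub]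
  refine permAvg_congr fun g => ?_
  rw [nearHookChar]
  push_cast
  ring

end Integrality

section CycleTypes

lemma not_dvd_orderOf_of_pow_eq_one {G : Type*} [Monoid G] {g : G} {p m : ℕ} (h : g ^ m = 1)
    (hm : ¬ p ∣ m) : ¬ p ∣ orderOf g :=
  fun hp => hm (hp.trans (orderOf_dvd_of_pow_eq_one h))

lemma not_dvd_orderOf_finRotate {a p : ℕ} (h : ¬ p ∣ a) : ¬ p ∣ orderOf (finRotate a) := by
  refine not_dvd_orderOf_of_pow_eq_one (m := a) ?_ h
  rcases lt_or_ge a 2 with ha | ha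
  · have : Subsingleton (Fin a) := Fin.subsingleton_iff_le_one.mpr (by omega)
    exact Subsingleton.elim _ _
  · have h1 := (isCycle_finRotate_of_le ha).orderOf
    rw [support_finRotate_of_le ha, Finset.card_univ, Fintype.card_fin] at h1
    exact orderOf_dvd_iff_pow_eq_one.mp h1.dvd

lemma not_dvd_orderOf_sumCongr {a b p : ℕ} (hp : p.Prime) {g₁ : Perm (Fin a)} {g₂ : Perm (Fin b)}
    (h₁ : ¬ p ∣ orderOf g₁) (h₂ : ¬ p ∣ orderOf g₂) :
    ¬ p ∣ orderOf (finSumFinEquiv.permCongr (Equiv.sumCongr g₁ g₂)) := by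
  refine not_dvd_orderOf_of_pow_eq_one (m := orderOf g₁ * orderOf g₂) ?_ (hp.not_dvd_mul h₁ h₂)
  rw [← youngHom_apply finSumFinEquiv (g₁, g₂), ← map_pow, Prod.pow_mk, pow_mul, pow_mul',
    pow_orderOf_eq_one, pow_orderOf_eq_one, one_pow, one_pow, ← Prod.one_eq_mk, map_one]

lemma exists_perm_sumCongr {a b n p : ℕ} (hp : p.Prime) (g₁ : Perm (Fin a)) (g₂ : Perm (Fin b))
    (h₁ : ¬ p ∣ orderOf g₁) (h₂ : ¬ p ∣ orderOf g₂) (h : a + b = n) :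
    ∃ g : Perm (Fin n), ¬ p ∣ orderOf g ∧ permPoly g = permPoly g₁ * permPoly g₂ := by
  subst h
  exact ⟨_, not_dvd_orderOf_sumCongr hp h₁ h₂, by rw [permPoly_permCongr, permPoly_sumCongr]⟩

lemma permPoly_finRotate_eq {a : ℕ} (ha : a ≠ 0) :
    permPoly (finRotate a) = 1 + C (-(-1) ^ a) * X ^ a := by
  rw [permPoly_finRotate ha, neg_pow]
  simp
  ring

lemma exists_perm_two_cycles {a b n p : ℕ} (hp : p.Prime) (ha : ¬ p ∣ a) (hb : ¬ p ∣ b)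
    (h : a + b = n) : ∃ g : Perm (Fin n), ¬ p ∣ orderOf g ∧
      permPoly g = (1 + C (-(-1) ^ a) * X ^ a) * (1 + C (-(-1) ^ b) * X ^ b) := by
  have ha0 : a ≠ 0 := fun h => ha (h ▸ dvd_zero p)
  have hb0 : b ≠ 0 := fun h => hb (h ▸ dvd_zero p)
  rw [← permPoly_finRotate_eq ha0, ← permPoly_finRotate_eq hb0]
  exact exists_perm_sumCongr hp _ _ (not_dvd_orderOf_finRotate ha) (not_dvd_orderOf_finRotate hb) h

lemma exists_perm_two_cycles_fixed_point {a b n p : ℕ} (hp : p.Prime) (ha : ¬ p ∣ a)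
    (hb : ¬ p ∣ b) (h : a + b + 1 = n) : ∃ g : Perm (Fin n), ¬ p ∣ orderOf g ∧
      permPoly g = (1 + X) * ((1 + C (-(-1) ^ a) * X ^ a) * (1 + C (-(-1) ^ b) * X ^ b)) := by
  obtain ⟨g, hg, hg'⟩ := exists_perm_two_cycles hp ha hb rfl
  rw [← hg', mul_comm, ← permPoly_fin_one (1 : Perm (Fin 1))]
  exact exists_perm_sumCongr hp _ _ hg (by simpa using hp.one_lt.ne') h

lemma coeff_mul_eq_zero {a b k : ℕ} (u v : ℤ) (h0 : k ≠ 0) (ha : k ≠ a) (hb : k ≠ b)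
    (hab : k ≠ a + b) : ((1 + C u * X ^ a) * (1 + C v * X ^ b)).coeff k = 0 := by
  have : ((1 + C u * X ^ a) * (1 + C v * X ^ b) : ℤ[X]) =
      1 + C u * X ^ a + C v * X ^ b + C (u * v) * X ^ (a + b) := by
    rw [C_mul]
    ring
  rw [this]
  simp only [coeff_add, coeff_one, coeff_C_mul_X_pow, h0, ha, hb, hab, if_false, add_zero]

end CycleTypes

section Hooks

variable {n p : ℕ}

lemma permPoly_one {α : Type*} [Fintype α] [DecidableEq α] :
    permPoly (1 : Perm α) = (1 + X) ^ Fintype.card α := by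
  have : (1 + (X : ℤ[X]) • (1 : Perm α).permMatrix ℤ[X]) = (1 + X : ℤ[X]) • 1 := by
    rw [add_smul, one_smul]
    congr 2
    ext i j : 2
    simp [Matrix.one_apply]
  rw [permPoly, this, Matrix.det_smul, Matrix.det_one, mul_one]

lemma hookChar_one_eq {α : Type*} [Fintype α] [DecidableEq α] [Nonempty α] (k : ℕ) :
    hookChar k (1 : Perm α) = (Fintype.card α - 1).choose k := by
  rw [hookChar_eq_coeff (q := (1 + X) ^ (Fintype.card α - 1)), coeff_one_add_X_pow]
  rw [permPoly_one, ← pow_succ', Nat.sub_add_cancel Fintype.card_pos]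

lemma exists_hookChar_eq_zero (hp : p.Prime) (hn : 9 ≤ n) {k : ℕ} (hk : k ≠ 0)
    (hkn : k + 2 ≤ n) : ∃ g : Perm (Fin n), ¬ p ∣ orderOf g ∧ hookChar k g = 0 := by
  have h1 : ¬ p ∣ 1 := hp.one_lt.ne' ∘ Nat.dvd_one.mp
  by_cases hpn : p ∣ n - 1
  · have hsub : ∀ {m}, ¬ p ∣ m → ∀ {j}, j + m = n - 1 → ¬ p ∣ j := fun hm j hj h =>
      hm ((Nat.dvd_add_right h).mp (hj ▸ hpn))
    have hpn2 : ¬ p ∣ n - 2 := hsub h1 (by omega)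
    rcases hp.eq_two_or_odd' with rfl | hodd
    · by_cases hk' : k = 1 ∨ k = n - 2
      · obtain ⟨g, hg, hg'⟩ := exists_perm_two_cycles_fixed_point hp (a := n - 4) (b := 3) (n := n)
          (by omega) (by omega) (by omega)
        refine ⟨g, hg, ?_⟩
        rw [hookChar_eq_coeff hg', coeff_mul_eq_zero] <;> omega
      · obtain ⟨g, hg, hg'⟩ := exists_perm_two_cycles_fixed_point hp (a := n - 2) (b := 1) (n := n)
          (by omega) (by omega) (by omega)
        refine ⟨g, hg, ?_⟩
        rw [hookChar_eq_coeff (q := (1 + C (-(-1) ^ (n - 2)) * X ^ (n - 2)) * (1 + C 1 * X ^ 1))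
          (hg'.trans (by simp)), coeff_mul_eq_zero] <;> omega
    · have hp2 : ¬ p ∣ 2 := fun h => by
        rw [(Nat.prime_dvd_prime_iff_eq hp Nat.prime_two).mp h] at hodd
        exact absurd hodd (by decide)
      by_cases hk' : k = 1 ∨ k = n - 2
      · obtain ⟨g, hg, hg'⟩ := exists_perm_two_cycles_fixed_point hp (a := n - 3) (b := 2) (n := n)
          (hsub hp2 (by omega)) hp2 (by omega)
        refine ⟨g, hg, ?_⟩
        rw [hookChar_eq_coeff hg', coeff_mul_eq_zero] <;> omega
      · obtain ⟨g, hg, hg'⟩ := exists_perm_two_cycles hp (a := n - 2) (b := 2) (n := n)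
          hpn2 hp2 (by omega)
        refine ⟨g, hg, ?_⟩
        rw [hookChar_eq_coeff (q := (1 + C (-(-1) ^ (n - 2)) * X ^ (n - 2)) * (1 + C (-1) * X ^ 1))
          (hg'.trans (by simp; ring)), coeff_mul_eq_zero] <;> omega
  · obtain ⟨g, hg, hg'⟩ := exists_perm_two_cycles hp (a := n - 1) (b := 1) (n := n) hpn h1
      (by omega)
    refine ⟨g, hg, ?_⟩
    rw [hookChar_eq_coeff (q := 1 + C (-(-1) ^ (n - 1)) * X ^ (n - 1))
      (hg'.trans (by simp; ring))]
    simp only [coeff_add, coeff_one, coeff_C_mul_X_pow]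
    rw [if_neg hk, if_neg (by omega), add_zero]

lemma exists_nearHookChar_eq_zero (hp : p.Prime) (hn : 9 ≤ n) (hpn : p ∣ n) {k : ℕ}
    (hkn : k + 3 ≤ n) : ∃ g : Perm (Fin n), ¬ p ∣ orderOf g ∧ nearHookChar k g = 0 := by
  have hsub : ∀ {m}, ¬ p ∣ m → ∀ {j}, j + m = n → ¬ p ∣ j := fun hm j hj h =>
    hm ((Nat.dvd_add_right h).mp (hj ▸ hpn))
  have key : ∀ m, ¬ p ∣ m → m ≠ 1 → m + 1 < n → k + 1 ≠ m → k + 1 + m ≠ n →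
      ∃ g : Perm (Fin n), ¬ p ∣ orderOf g ∧ nearHookChar k g = 0 := by
    intro m hm hm1 hmn h1 h2
    obtain ⟨g, hg, hg'⟩ := exists_perm_two_cycles hp (a := n - m) (b := m) (n := n)
      (hsub hm (by omega)) hm (by omega)
    refine ⟨g, hg, ?_⟩
    rw [nearHookChar, extChar, extChar, hg', coeff_mul_eq_zero, coeff_mul_eq_zero] <;> omega
  rcases hp.eq_two_or_odd' with rfl | hodd
  · by_cases hk' : k + 1 = 3 ∨ k + 1 + 3 = n
    · exact key 5 (by omega) (by omega) (by omega) (by omega) (by omega)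
    · exact key 3 (by omega) (by omega) (by omega) (by omega) (by omega)
  · have hp2 : ¬ p ∣ 2 := fun h => by
      rw [(Nat.prime_dvd_prime_iff_eq hp Nat.prime_two).mp h] at hodd
      exact absurd hodd (by decide)
    by_cases hk' : k + 1 = 2 ∨ k + 1 + 2 = n
    · exact key 4 (hp.not_dvd_mul hp2 hp2) (by omega) (by omega) (by omega) (by omega)
    · exact key 2 hp2 (by omega) (by omega) (by omega) (by omega)

end Hooks

section SymmetricGroup

variable {n p : ℕ} {V : Type*} [AddCommGroup V] [Module ℂ V] [FiniteDimensional ℂ V]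

omit [FiniteDimensional ℂ V] in
lemma exists_character_eq_zero_of_permAvg {ρ : Representation ℂ (Perm (Fin n)) V}
    (hρ : permAvg (fun g => ρ.character g * starRingEnd ℂ (ρ.character g)) = 1)
    {h : Perm (Fin n) → ℤ} (hh : permAvg (fun g => (h g : ℂ) * h g) = 1)
    (hint : ∃ a : ℤ, permAvg (fun g => ρ.character g * h g) = a)
    (hne : permAvg (fun g => ρ.character g * h g) ≠ 0)
    (hz : ∃ g, ¬ p ∣ orderOf g ∧ h g = 0) :
    ∃ g, ¬ p ∣ orderOf g ∧ ρ.character g = 0 := by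
  obtain ⟨a, ha⟩ := hint
  obtain ⟨g, hg, hg'⟩ := hz
  obtain ⟨-, h1⟩ := eq_int_mul_of_permAvg_ne_zero hρ hh ha
    (by rintro rfl; exact hne (by simpa using ha))
  exact ⟨g, hg, by rw [h1, hg', Int.cast_zero, mul_zero]⟩

lemma exists_character_eq_zero_of_permAvg_hookChar (hp : p.Prime) (hn : 9 ≤ n)
    {ρ : Representation ℂ (Perm (Fin n)) V}
    (hρ : permAvg (fun g => ρ.character g * starRingEnd ℂ (ρ.character g)) = 1)
    (hdim : Module.finrank ℂ V ≠ 1) {k : ℕ} (hk : k < n)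
    (hne : permAvg (fun g => ρ.character g * hookChar k g) ≠ 0) :
    ∃ g, ¬ p ∣ orderOf g ∧ ρ.character g = 0 := by
  have hh : permAvg (fun g : Perm (Fin n) => (hookChar k g : ℂ) * hookChar k g) = 1 := by
    rw [permAvg_hookChar_mul_hookChar (by simpa using hk), if_pos rfl]
  by_cases hk' : k ≠ 0 ∧ k + 2 ≤ n
  · exact exists_character_eq_zero_of_permAvg hρ hh
      (exists_int_permAvg_character_mul_hookChar ρ k) hne
      (exists_hookChar_eq_zero hp hn hk'.1 hk'.2)
  · exfalso
    obtain ⟨a, ha⟩ := exists_int_permAvg_character_mul_hookChar ρ k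
    obtain ⟨h1, h2⟩ := eq_int_mul_of_permAvg_ne_zero hρ hh ha
      (by rintro rfl; exact hne (by simpa using ha))
    have : Nonempty (Fin n) := ⟨⟨0, by omega⟩⟩
    have h3 := h2 1
    have h4 : (n - 1).choose k = 1 := by
      rcases (by omega : k = 0 ∨ k = n - 1) with rfl | rfl <;> simp
    rw [ρ.char_one, hookChar_one_eq, Fintype.card_fin, h4] at h3
    have h5 : (Module.finrank ℂ V : ℤ) = a := by
      rw [Nat.cast_one, Int.cast_one, mul_one] at h3
      exact_mod_cast h3
    omega

theorem exists_character_eq_zero_of_symmetricGroup (hp : p.Prime) (hn : 9 ≤ n)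
    {ρ : Representation ℂ (Perm (Fin n)) V}
    (hρ : permAvg (fun g => ρ.character g * ρ.character g⁻¹) = 1)
    (hdim : Module.finrank ℂ V ≠ 1) :
    ∃ g, ¬ p ∣ orderOf g ∧ ρ.character g = 0 := by
  simp only [character_inv_eq_conj] at hρ
  by_cases hpn : p ∣ n
  · have hpn1 : ¬ p ∣ n - 1 := fun h => hp.one_lt.ne'
      (Nat.dvd_one.mp ((Nat.dvd_add_right h).mp (by rwa [Nat.sub_add_cancel (by omega)])))
    have ε : Fin 1 ⊕ Fin (n - 1) ≃ Fin n := Fintype.equivOfCardEq (by simp; omega)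
    set τ := ε.permCongr (Equiv.sumCongr 1 (finRotate (n - 1))) with hτ
    by_cases h0 : ρ.character τ = 0
    · refine ⟨τ, not_dvd_orderOf_of_pow_eq_one (m := orderOf (finRotate (n - 1))) ?_
        (not_dvd_orderOf_finRotate hpn1), h0⟩
      rw [hτ, ← youngHom_apply ε (1, finRotate (n - 1)), ← map_pow, Prod.pow_mk, one_pow,
        pow_orderOf_eq_one, ← Prod.one_eq_mk, map_one]
    obtain ⟨k, hk, hk'⟩ := exists_permAvg_mul_hookChar_ne_zero (by omega)
      (isClassFun_character (ρ.comp ((youngHom ε).comp (MonoidHom.inr _ _)))) h0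
    have h1 := permAvg_mul_extChar_one_mul_hookSum ε (isClassFun_character ρ) k
    replace hk' : permAvg (fun b => ρ.character (ε.permCongr (Equiv.sumCongr 1 b)) *
      hookChar k b) ≠ 0 := hk'
    rw [← h1] at hk'
    by_contra hcon
    have hhook : ∀ j < n, permAvg (fun g => ρ.character g * hookChar j g) = 0 := fun j hj => by
      by_contra h
      exact hcon (exists_character_eq_zero_of_permAvg_hookChar hp hn hρ hdim hj h)
    rcases Nat.eq_zero_or_pos k with rfl | hk0
    · apply hk'
      have h2 : ∀ g : Perm (Fin n), ρ.character g * ((extChar 1 g * hookSum 0 g : ℤ) : ℂ) =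
          ρ.character g * hookChar 1 g + ρ.character g * hookChar 0 g := fun g => by
        rw [hookSum_zero, hookChar_succ 0]
        push_cast
        ring
      rw [permAvg_congr h2, permAvg_add, hhook _ (by omega), hhook _ (by omega), add_zero]
    · have h2 : ∀ g : Perm (Fin n), ρ.character g * ((extChar 1 g * hookSum k g : ℤ) : ℂ) =
          ρ.character g * nearHookChar k g + ρ.character g * hookChar k g +
            ρ.character g * hookChar (k + 1) g := fun g => by
        rw [hookSum_mul_extChar_one]
        push_cast
        ring
      rw [permAvg_congr h2, permAvg_add, permAvg_add, hhook _ (by omega), hhook _ (by omega),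
        add_zero, add_zero] at hk'
      have h3 := permAvg_nearHookChar_mul_self (α := Fin n) hk0.ne' (by simp; omega)
      rw [Fintype.card_fin] at h3
      split_ifs at h3 with hkn
      · apply hk'
        simp [permAvg, eq_zero_of_permAvg_mul_self_eq_zero h3]
      · exact hcon (exists_character_eq_zero_of_permAvg hρ h3
          (exists_int_permAvg_character_mul_nearHookChar ρ (by simp; omega) k) hk'
          (exists_nearHookChar_eq_zero hp hn hpn (by omega)))
  · by_cases h0 : ρ.character (finRotate n) = 0
    · exact ⟨_, not_dvd_orderOf_finRotate hpn, h0⟩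
    · obtain ⟨k, hk, hk'⟩ := exists_permAvg_mul_hookChar_ne_zero (by omega)
        (isClassFun_character ρ) h0
      exact exists_character_eq_zero_of_permAvg_hookChar hp hn hρ hdim hk hk'

end SymmetricGroup

end SymmetricGroupCharacters

section WreathProductCharacters

open Equiv

section Schur

variable {G V : Type*} [Group G] [Fintype G] [AddCommGroup V] [Module ℂ V] [FiniteDimensional ℂ V]
  {ρ : Representation ℂ G V}

lemma finrank_intertwiningMap_eq_one
    (hρ : ∑ g, ρ.character g * ρ.character g⁻¹ = Nat.card G) :
    Module.finrank ℂ (ρ.IntertwiningMap ρ) = 1 := by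
  have hG : (Nat.card G : ℂ) ≠ 0 := NeZero.ne _
  have := invertibleOfNonzero hG
  have h := ρ.card_inv_mul_sum_char_mul_char_eq_finrank ρ
  rw [hρ, inv_mul_cancel₀ hG] at h
  exact_mod_cast h.symm

lemma exists_eq_smul_of_commute (hρ : ∑ g, ρ.character g * ρ.character g⁻¹ = Nat.card G)
    {f : V →ₗ[ℂ] V} (hf : ∀ g, Commute f (ρ g)) : ∃ c : ℂ, ∀ v, f v = c • v := by
  have hone : (1 : ρ.IntertwiningMap ρ) ≠ 0 := fun h => by
    have h1 := finrank_intertwiningMap_eq_one hρ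
    have : Subsingleton (ρ.IntertwiningMap ρ) :=
      ⟨fun a b => by rw [← one_mul a, ← one_mul b, h, zero_mul, zero_mul]⟩
    rw [Module.finrank_zero_of_subsingleton] at h1
    exact zero_ne_one h1
  obtain ⟨c, hc⟩ := (finrank_eq_one_iff_of_nonzero' _ hone).mp
    (finrank_intertwiningMap_eq_one hρ) ⟨f, fun g => (hf g).eq⟩
  exact ⟨c, fun v => (congrArg (fun t : ρ.IntertwiningMap ρ => t v) hc).symm⟩

lemma eq_bot_or_eq_top_of_invariant (hρ : ∑ g, ρ.character g * ρ.character g⁻¹ = Nat.card G)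
    {W : Submodule ℂ V} (hW : ∀ g, ∀ v ∈ W, ρ g v ∈ W) : W = ⊥ ∨ W = ⊤ := by
  obtain ⟨π, hπ⟩ := W.subtype.exists_leftInverse_of_injective W.ker_subtype
  let f : V →ₗ[ℂ] V := ∑ g, ρ g ∘ₗ W.subtype ∘ₗ π ∘ₗ ρ g⁻¹
  have hf (v : V) : f v = ∑ g, ρ g (π (ρ g⁻¹ v)) := by simp [f]
  have hcomm (h : G) : Commute f (ρ h) := by
    refine LinearMap.ext fun v => ?_
    rw [Module.End.mul_apply, Module.End.mul_apply, hf, hf, map_sum,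
      ← Equiv.sum_comp (Equiv.mulLeft h)]
    refine Finset.sum_congr rfl fun g _ => ?_
    simp only [Equiv.coe_mulLeft, mul_inv_rev, map_mul, Module.End.mul_apply,
      Representation.inv_self_apply]
  obtain ⟨c, hc⟩ := exists_eq_smul_of_commute hρ hcomm
  have hfW (w : V) (hw : w ∈ W) : f w = (Fintype.card G : ℂ) • w := by
    have (g : G) : ρ g (π (ρ g⁻¹ w)) = w := by
      have := LinearMap.congr_fun hπ ⟨ρ g⁻¹ w, hW _ _ hw⟩
      simp only [LinearMap.comp_apply, Submodule.subtype_apply, LinearMap.id_apply] at this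
      rw [this, Representation.self_inv_apply]
    rw [hf, Finset.sum_congr rfl fun g _ => this g, Finset.sum_const, Finset.card_univ,
      Nat.cast_smul_eq_nsmul]
  refine or_iff_not_imp_left.mpr fun hbot => ?_
  obtain ⟨w, hw, hw0⟩ := W.ne_bot_iff.mp hbot
  have hcG : c = Fintype.card G := by
    have := (hc w).symm.trans (hfW w hw)
    exact smul_left_injective ℂ hw0 this
  have hG : (Fintype.card G : ℂ) ≠ 0 := Nat.cast_ne_zero.mpr Fintype.card_ne_zero
  refine eq_top_iff.mpr fun v _ => (W.smul_mem_iff hG).mp ?_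
  rw [← hcG, ← hc, hf]
  exact W.sum_mem fun g _ => hW _ _ (π _).2

end Schur

section Wreath

open SemidirectProduct

variable {r n : ℕ} {V : Type*} [AddCommGroup V] [Module ℂ V]

lemma wreathAction_mulSingle (σ : Perm (Fin n)) (i : Fin n) (x : Multiplicative (ZMod r)) :
    wreathAction r n σ (Pi.mulSingle i x) = Pi.mulSingle (σ i) x := by
  funext j
  change (Pi.mulSingle i x : WreathBase r n) (σ.symm j) = _
  rw [Pi.mulSingle_apply, Pi.mulSingle_apply]
  exact if_congr (Equiv.symm_apply_eq σ) rfl rfl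

lemma GWreath.inl_mul_eq_mul_inl (g : GWreath r n) (i : Fin n) (x : Multiplicative (ZMod r)) :
    (inl (Pi.mulSingle (g.right i) x) * g : GWreath r n) = g * inl (Pi.mulSingle i x) := by
  refine SemidirectProduct.ext ?_ ?_
  · simp [wreathAction_mulSingle, mul_comm]
  · simp

lemma GWreath.inl_mul_inr (σ : Perm (Fin n)) (b : WreathBase r n) :
    (inl (b * (wreathAction r n σ b)⁻¹) * inr σ : GWreath r n) = inl b * inr σ * (inl b)⁻¹ := by
  rw [← map_inv, map_mul, inl_aut, map_inv, map_inv]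
  group

/-- The action on a vector `u` of the `i`-th factor of the base group of `G(r,1,n)`. -/
def coordAct (ρ : Representation ℂ (GWreath r n) V) (u : V) (i : Fin n)
    (x : Multiplicative (ZMod r)) : V :=
  ρ (inl (Pi.mulSingle i x)) u

/-- The sum of the operators `b (σ b)⁻¹` over the base group of `G(r,1,n)`. -/
noncomputable def twistSum [NeZero r] (ρ : Representation ℂ (GWreath r n) V) (σ : Perm (Fin n)) :
    V →ₗ[ℂ] V :=
  ∑ b : WreathBase r n, ρ (inl (b * (wreathAction r n σ b)⁻¹))

variable {ρ : Representation ℂ (GWreath r n) V}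

lemma coordAct_apply_perm (g : GWreath r n) (u : V) (i : Fin n) (x : Multiplicative (ZMod r)) :
    coordAct ρ (ρ g u) (g.right i) x = ρ g (coordAct ρ u i x) := by
  unfold coordAct
  rw [← Module.End.mul_apply, ← map_mul, GWreath.inl_mul_eq_mul_inl, map_mul, Module.End.mul_apply]

lemma coordAct_base (a : WreathBase r n) (u : V) (i : Fin n) (x : Multiplicative (ZMod r)) :
    coordAct ρ (ρ (inl a) u) i x = ρ (inl a) (coordAct ρ u i x) :=
  coordAct_apply_perm (inl a) u i x

variable [NeZero r]

lemma twistSum_apply (σ : Perm (Fin n)) (u : V) :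
    twistSum ρ σ u = ∑ b : WreathBase r n, ρ (inl (b * (wreathAction r n σ b)⁻¹)) u := by
  simp [twistSum]

lemma coordAct_twistSum (σ : Perm (Fin n)) (u : V) (i : Fin n) (x : Multiplicative (ZMod r)) :
    coordAct ρ (twistSum ρ σ u) i x = twistSum ρ σ (coordAct ρ u i x) := by
  simp only [twistSum_apply, ← coordAct_base]
  simp [coordAct]

lemma coordAct_twistSum_perm (σ : Perm (Fin n)) (u : V) (i : Fin n) :
    coordAct ρ (twistSum ρ σ u) (σ i) = coordAct ρ (twistSum ρ σ u) i := by
  funext x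
  simp only [coordAct, twistSum_apply, map_sum]
  rw [← Equiv.sum_comp (Equiv.mulRight (Pi.mulSingle i x : WreathBase r n))]
  refine Finset.sum_congr rfl fun b _ => ?_
  rw [← Module.End.mul_apply, ← map_mul, ← map_mul, ← Module.End.mul_apply, ← map_mul, ← map_mul]
  simp only [Equiv.coe_mulRight]
  rw [map_mul (wreathAction r n σ), wreathAction_mulSingle]
  congr 3
  rw [mul_inv_rev, mul_left_comm, mul_inv_cancel_left, mul_comm b, mul_assoc]

lemma trace_twistSum_mul (σ : Perm (Fin n)) :
    LinearMap.trace ℂ V (twistSum ρ σ * ρ (inr σ)) =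
      Fintype.card (WreathBase r n) * ρ.character (inr σ) := by
  simp only [twistSum, Finset.sum_mul, ← map_mul, GWreath.inl_mul_inr, map_sum]
  refine (Finset.sum_congr rfl fun b _ => ρ.char_conj (inr σ) (inl b)).trans ?_
  rw [Finset.sum_const, Finset.card_univ, nsmul_eq_mul]

lemma exists_twistSum_ne_zero {σ : Perm (Fin n)} (h : ρ.character (inr σ) ≠ 0) :
    ∃ v, twistSum ρ σ v ≠ 0 := by
  by_contra! h0
  have h1 := trace_twistSum_mul (ρ := ρ) σ
  rw [LinearMap.ext (f := twistSum ρ σ) (g := 0) h0, zero_mul, map_zero] at h1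
  exact mul_ne_zero (Nat.cast_ne_zero.mpr Fintype.card_ne_zero) h h1.symm

end Wreath

section Reduction

open SemidirectProduct

variable {r n p : ℕ} {V : Type*} [AddCommGroup V] [Module ℂ V]
  {ρ : Representation ℂ (GWreath r n) V}

lemma eq_of_forall_finRotate {X : Type*} {m : ℕ} {f : Fin m → X}
    (h : ∀ i, f (finRotate m i) = f i) (i j : Fin m) : f i = f j := by
  cases m with
  | zero => exact i.elim0
  | succ m =>
    have h0 (k : Fin (m + 1)) : f k = f 0 := by
      induction k using Fin.induction with
      | zero => rfl
      | succ k ih => rw [← ih, ← h k.castSucc, finRotate_apply, Fin.coeSucc_eq_succ]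
    rw [h0 i, h0 j]

lemma commute_base (h : ∀ u i j, coordAct ρ u i = coordAct ρ u j) (a : WreathBase r n)
    (g : GWreath r n) : Commute (ρ (inl a)) (ρ g) := by
  have ha : a ∈ (Submonoid.centralizer (Set.range ρ)).comap (ρ.comp inl) := by
    rw [← Finset.univ_prod_mulSingle a]
    refine Submonoid.prod_mem _ fun i _ => ?_
    rw [Submonoid.mem_comap, Submonoid.mem_centralizer_iff]
    rintro _ ⟨g, rfl⟩
    refine LinearMap.ext fun u => ?_
    change ρ g (coordAct ρ u i (a i)) = coordAct ρ (ρ g u) i (a i)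
    rw [h (ρ g u) i (g.right i), coordAct_apply_perm]
  exact (Submonoid.mem_centralizer_iff.mp ha (ρ g) ⟨g, rfl⟩).symm

variable [FiniteDimensional ℂ V]

lemma permAvg_character_inr_eq_one [NeZero r] [Fintype (GWreath r n)]
    (hρ : ∑ g, ρ.character g * ρ.character g⁻¹ = Nat.card (GWreath r n))
    (h : ∀ u i j, coordAct ρ u i = coordAct ρ u j) :
    permAvg (fun σ => ρ.character (inr σ) * ρ.character (inr σ⁻¹)) = 1 := by
  have hkey (a : WreathBase r n) (σ : Perm (Fin n)) :
      ρ.character (inl a * inr σ) * ρ.character (inl a * inr σ)⁻¹ =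
        ρ.character (inr σ) * ρ.character (inr σ⁻¹) := by
    obtain ⟨c, hc⟩ := exists_eq_smul_of_commute hρ (commute_base h a)
    have h1 : ρ.character (inl a * inr σ) = c * ρ.character (inr σ) := by
      rw [Representation.character, map_mul, LinearMap.ext (f := ρ (inl a)) (g := c • 1) hc,
        smul_mul_assoc, one_mul, map_smul, smul_eq_mul]
      rfl
    have h2 : ρ.character (inr σ⁻¹) = c * ρ.character (inl a * inr σ)⁻¹ := by
      have : (inr σ⁻¹ : GWreath r n) = (inl a * inr σ)⁻¹ * inl a := by
        rw [mul_inv_rev, inv_mul_cancel_right, map_inv]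
      rw [Representation.character, this, map_mul, LinearMap.ext (f := ρ (inl a)) (g := c • 1) hc,
        mul_smul_comm, mul_one, map_smul, smul_eq_mul]
      rfl
    rw [h1, h2]
    ring
  have hsum : ∑ g, ρ.character g * ρ.character g⁻¹ =
      Fintype.card (WreathBase r n) *
        ∑ σ : Perm (Fin n), ρ.character (inr σ) * ρ.character (inr σ⁻¹) := by
    rw [← (equivProd (φ := wreathAction r n)).symm.sum_comp, Fintype.sum_prod_type]
    rw [← nsmul_eq_mul, ← Finset.card_univ, ← Finset.sum_const]
    refine Finset.sum_congr rfl fun a _ => Finset.sum_congr rfl fun σ _ => ?_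
    rw [← hkey a σ, ← mk_eq_inl_mul_inr]
    rfl
  rw [hρ, SemidirectProduct.card, Nat.cast_mul, Nat.card_eq_fintype_card,
    Nat.card_eq_fintype_card] at hsum
  rw [permAvg, ← mul_left_cancel₀ (Nat.cast_ne_zero.mpr Fintype.card_ne_zero) hsum,
    inv_mul_cancel₀ (Nat.cast_ne_zero.mpr Fintype.card_ne_zero)]

lemma coordAct_eq_of_exists [NeZero r] [Fintype (GWreath r n)]
    (hρ : ∑ g, ρ.character g * ρ.character g⁻¹ = Nat.card (GWreath r n))
    {u : V} (hu : u ≠ 0) (h : ∀ i j, coordAct ρ u i = coordAct ρ u j) (v : V) (i j : Fin n) :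
    coordAct ρ v i = coordAct ρ v j := by
  let W : Submodule ℂ V :=
    ⨅ i, ⨅ j, ⨅ x, LinearMap.eqLocus (ρ (inl (Pi.mulSingle i x))) (ρ (inl (Pi.mulSingle j x)))
  have hmem (v : V) : v ∈ W ↔ ∀ i j, coordAct ρ v i = coordAct ρ v j := by
    simp only [W, Submodule.mem_iInf, LinearMap.mem_eqLocus, funext_iff]
    rfl
  have hW : ∀ g, ∀ v ∈ W, ρ g v ∈ W := fun g v hv => by
    rw [hmem] at hv ⊢
    have (i : Fin n) : coordAct ρ (ρ g v) i = fun x => ρ g (coordAct ρ v (g.right.symm i) x) := by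
      funext x
      rw [← coordAct_apply_perm, Equiv.apply_symm_apply]
    intro i j
    rw [this, this, hv (g.right.symm i) (g.right.symm j)]
  have htop := (eq_bot_or_eq_top_of_invariant hρ hW).resolve_left
    (W.ne_bot_iff.mpr ⟨u, (hmem u).mpr h, hu⟩)
  exact (hmem v).mp (htop ▸ Submodule.mem_top) i j

lemma exists_apply_apply_ne_zero {G : Type*} [Group G] [Fintype G] {ρ : Representation ℂ G V}
    (hρ : ∑ g, ρ.character g * ρ.character g⁻¹ = Nat.card G)
    {f : V →ₗ[ℂ] V} {u v : V} (hu : u ≠ 0) (hv : f v ≠ 0) : ∃ g, f (ρ g u) ≠ 0 := by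
  by_contra! h
  let W : Submodule ℂ V := ⨅ g, LinearMap.ker (f ∘ₗ ρ g)
  have hmem (v : V) : v ∈ W ↔ ∀ g, f (ρ g v) = 0 := by
    simp only [W, Submodule.mem_iInf, LinearMap.mem_ker, LinearMap.comp_apply]
  have hW : ∀ g, ∀ v ∈ W, ρ g v ∈ W := fun g v hv => (hmem _).mpr fun k => by
    rw [← Module.End.mul_apply (ρ k), ← map_mul]
    exact (hmem v).mp hv (k * g)
  have htop := (eq_bot_or_eq_top_of_invariant hρ hW).resolve_left
    (W.ne_bot_iff.mpr ⟨u, (hmem u).mpr h, hu⟩)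
  refine hv ?_
  simpa using (hmem v).mp (htop ▸ Submodule.mem_top) 1

lemma exists_coordAct_eq [NeZero r] [Fintype (GWreath r n)] (hp : p.Prime) (hn : 9 ≤ n)
    (hρ : ∑ g, ρ.character g * ρ.character g⁻¹ = Nat.card (GWreath r n))
    (h : ∀ σ : Perm (Fin n), ¬ p ∣ orderOf σ → ρ.character (inr σ) ≠ 0) :
    ∃ u ≠ 0, ∀ i j, coordAct ρ u i = coordAct ρ u j := by
  by_cases hpn : p ∣ n
  · obtain ⟨a, b, ha, hb, hab, hpa, hpb⟩ :
        ∃ a b, 2 ≤ a ∧ 2 ≤ b ∧ a + b = n ∧ ¬ p ∣ a ∧ ¬ p ∣ b := by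
      by_cases h2 : p = 2
      · subst h2
        exact ⟨n - 3, 3, by omega, by omega, by omega, by omega, by omega⟩
      · have hp2 : ¬ p ∣ 2 := fun hd => h2 ((Nat.prime_dvd_prime_iff_eq hp Nat.prime_two).mp hd)
        exact ⟨n - 2, 2, by omega, le_rfl, by omega,
          fun hd => hp2 ((Nat.dvd_sub hpn hd).trans (by rw [Nat.sub_sub_self (by omega)])), hp2⟩
    obtain ⟨m, rfl⟩ : ∃ m, n = m + 1 := ⟨n - 1, by omega⟩
    have hpm : ¬ p ∣ m := fun hd => hp.one_lt.ne' (Nat.dvd_one.mp ((Nat.dvd_add_right hd).mp hpn))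
    let σ : Perm (Fin (m + 1)) := finSumFinEquiv.permCongr (Equiv.sumCongr (finRotate m) 1)
    obtain ⟨τ, hτ, hτfix⟩ : ∃ τ : Perm (Fin (m + 1)), ¬ p ∣ orderOf τ ∧ ∀ i, τ i ≠ i := by
      rw [← hab]
      have hfix {c : ℕ} (hc : 2 ≤ c) (i : Fin c) : finRotate c i ≠ i :=
        Perm.mem_support.mp (support_finRotate_of_le hc ▸ Finset.mem_univ i)
      refine ⟨_, not_dvd_orderOf_sumCongr hp (not_dvd_orderOf_finRotate hpa)
        (not_dvd_orderOf_finRotate hpb), finSumFinEquiv.surjective.forall.mpr ?_⟩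
      rintro (i | i)
      · simpa using hfix ha i
      · simpa using hfix hb i
    obtain ⟨v, hv⟩ := exists_twistSum_ne_zero (h σ (not_dvd_orderOf_sumCongr hp
      (not_dvd_orderOf_finRotate hpm) (by simpa using hp.one_lt.ne')))
    obtain ⟨w, hw⟩ := exists_twistSum_ne_zero (h τ hτ)
    obtain ⟨g, hg⟩ := exists_apply_apply_ne_zero hρ hv hw
    have hσ (i j : Fin m) : coordAct ρ (twistSum ρ σ v) (finSumFinEquiv (Sum.inl i)) =
        coordAct ρ (twistSum ρ σ v) (finSumFinEquiv (Sum.inl j)) := by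
      refine eq_of_forall_finRotate
        (f := fun i => coordAct ρ (twistSum ρ σ v) (finSumFinEquiv (Sum.inl i))) (fun i => ?_) i j
      rw [← coordAct_twistSum_perm σ v (finSumFinEquiv (Sum.inl i))]
      simp [σ]
    have hσ' {i j : Fin (m + 1)} (hi : i ≠ Fin.last m) (hj : j ≠ Fin.last m) :
        coordAct ρ (twistSum ρ σ v) i = coordAct ρ (twistSum ρ σ v) j := by
      obtain ⟨i, rfl⟩ := Fin.exists_castSucc_eq.mpr hi
      obtain ⟨j, rfl⟩ := Fin.exists_castSucc_eq.mpr hj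
      exact hσ i j
    set u := twistSum ρ τ (ρ g (twistSum ρ σ v)) with hu
    have huσ {i j : Fin (m + 1)} (hi : i ≠ g.right (Fin.last m)) (hj : j ≠ g.right (Fin.last m)) :
        coordAct ρ u i = coordAct ρ u j := by
      rw [ne_eq, ← Equiv.symm_apply_eq] at hi hj
      funext x
      rw [hu, coordAct_twistSum, coordAct_twistSum, ← g.right.apply_symm_apply i,
        ← g.right.apply_symm_apply j, coordAct_apply_perm, coordAct_apply_perm, hσ' hi hj]
    have hother (i : Fin (m + 1)) :
        ∃ k, k ≠ g.right (Fin.last m) ∧ coordAct ρ u k = coordAct ρ u i := by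
      by_cases hi : i = g.right (Fin.last m)
      · exact ⟨τ i, hi ▸ hτfix i, coordAct_twistSum_perm _ _ _⟩
      · exact ⟨i, hi, rfl⟩
    refine ⟨u, hg, fun i j => ?_⟩
    obtain ⟨k, hk, hki⟩ := hother i
    obtain ⟨l, hl, hlj⟩ := hother j
    rw [← hki, ← hlj, huσ hk hl]
  · obtain ⟨v, hv⟩ := exists_twistSum_ne_zero (h _ (not_dvd_orderOf_finRotate hpn))
    exact ⟨_, hv, eq_of_forall_finRotate (coordAct_twistSum_perm (finRotate n) v)⟩

lemma exists_character_inr_eq_zero [NeZero r] [Fintype (GWreath r n)] (hp : p.Prime) (hn : 9 ≤ n)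
    (hρ : ∑ g, ρ.character g * ρ.character g⁻¹ = Nat.card (GWreath r n))
    (hdim : Module.finrank ℂ V ≠ 1) :
    ∃ σ : Perm (Fin n), ¬ p ∣ orderOf σ ∧ ρ.character (inr σ) = 0 := by
  by_contra! h
  obtain ⟨u, hu, hu'⟩ := exists_coordAct_eq hp hn hρ h
  obtain ⟨σ, hσ, hσ'⟩ := exists_character_eq_zero_of_symmetricGroup (ρ := ρ.comp inr) hp hn
    (permAvg_character_inr_eq_one hρ (coordAct_eq_of_exists hρ hu hu')) hdim
  exact h σ hσ hσ'

end Reduction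

end WreathProductCharacters

open CategoryTheory

/-- For `n ≥ 9` and any prime `p ≤ n`, every non-linear irreducible character of
`G(r,1,n)` vanishes at some `p`-regular element. -/
theorem stmt_17 (r n p : ℕ) (hr : 0 < r) (hn : 9 ≤ n) (hp : p.Prime) (hpn : p ≤ n)
    (V : FDRep ℂ (GWreath r n)) (hV : Simple V) (hnonlin : V.character 1 ≠ 1) :
    ∃ g : GWreath r n, ¬ p ∣ orderOf g ∧ V.character g = 0 := by
  have : NeZero r := ⟨hr.ne'⟩
  let : Fintype (GWreath r n) := Fintype.ofEquiv _ SemidirectProduct.equivProd.symm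
  obtain ⟨σ, hσ, hσ0⟩ := exists_character_inr_eq_zero (ρ := V.ρ) hp hn
    (V.simple_iff_char_is_norm_one.mp hV)
    fun hdim => hnonlin (by rw [FDRep.char_one, hdim, Nat.cast_one])
  exact ⟨SemidirectProduct.inr σ,
    by rwa [orderOf_injective _ SemidirectProduct.inr_injective], hσ0⟩
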